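/- arXiv:2506.17170 — 3 statements merged into one kernel-verified Lean document; each statement's English description precedes it below -/
import Mathlib

section
/- Let K₁, K₂ > 0 and 0 < ϑ < π/4, and set t = tan ϑ, u_ex = π/(1 + t). Define 𝒫(u) = (s₁⋆s₂)²·sin(u(1−t))·sin(u(1+t)), 𝒬(u) = s₁⋆s₂·c₁⋆c₂·cos(u)·sin²(ut), and ℛ(u) = −(c₁⋆c₂)²·sin²(ut) − (s₁⋆s₂)²·sin²(u)·cos²(ut) + sin²(ut)·cos²(ut). Then 𝒫(u) > 0 for all u ∈ (0, u_ex), and the function u ↦ (−𝒬(u) + √(𝒬(u)² − 𝒫(u)ℛ(u)))/𝒫(u) tends to +∞ as u → u_ex from below; i.e. the steepest descent path diverges at the vertical asymptote u = u_ex(ϑ) = π/(1 + tan ϑ). -/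
open Real Filter Set

/-- `𝒜(u,v) = c₁⋆c₂ − s₁⋆s₂ cos u cosh v`. -/
noncomputable def calA (K₁s K₂ u v : ℝ) : ℝ :=
  Real.cosh (2 * K₁s) * Real.cosh (2 * K₂)
    - Real.sinh (2 * K₁s) * Real.sinh (2 * K₂) * Real.cos u * Real.cosh v

/-- `ℬ(u,v) = s₁⋆s₂ sin u sinh v`. -/
noncomputable def calB (K₁s K₂ u v : ℝ) : ℝ :=
  Real.sinh (2 * K₁s) * Real.sinh (2 * K₂) * Real.sin u * Real.sinh v

/-- `𝒫(u) = (s₁⋆s₂)² sin(u(1−t)) sin(u(1+t))`. -/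
noncomputable def calP (K₁s K₂ t u : ℝ) : ℝ :=
  (Real.sinh (2 * K₁s) * Real.sinh (2 * K₂)) ^ 2
    * Real.sin (u * (1 - t)) * Real.sin (u * (1 + t))

/-- `𝒬(u) = s₁⋆s₂ c₁⋆c₂ cos u sin²(ut)`. -/
noncomputable def calQ (K₁s K₂ t u : ℝ) : ℝ :=
  Real.sinh (2 * K₁s) * Real.sinh (2 * K₂)
    * (Real.cosh (2 * K₁s) * Real.cosh (2 * K₂)) * Real.cos u * Real.sin (u * t) ^ 2

/-- `ℛ(u) = −(c₁⋆c₂)² sin²(ut) − (s₁⋆s₂)² sin²u cos²(ut) + sin²(ut) cos²(ut)`. -/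
noncomputable def calR (K₁s K₂ t u : ℝ) : ℝ :=
  -(Real.cosh (2 * K₁s) * Real.cosh (2 * K₂)) ^ 2 * Real.sin (u * t) ^ 2
    - (Real.sinh (2 * K₁s) * Real.sinh (2 * K₂)) ^ 2 * Real.sin u ^ 2 * Real.cos (u * t) ^ 2
    + Real.sin (u * t) ^ 2 * Real.cos (u * t) ^ 2
theorem statement_12 (K₁ K₂ K₁s K₂s : ℝ) (hK₁ : 0 < K₁) (hK₂ : 0 < K₂)
    (hdual₁ : Real.tanh K₁s = Real.exp (-(2 * K₁)))
    (hdual₂ : Real.tanh K₂s = Real.exp (-(2 * K₂)))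
    (ϑ : ℝ) (hϑ₁ : 0 < ϑ) (hϑ₂ : ϑ < π / 4) :
    (∀ u ∈ Set.Ioo (0 : ℝ) (π / (1 + Real.tan ϑ)), 0 < calP K₁s K₂ (Real.tan ϑ) u) ∧
    Filter.Tendsto
      (fun u => (-(calQ K₁s K₂ (Real.tan ϑ) u)
        + Real.sqrt (calQ K₁s K₂ (Real.tan ϑ) u ^ 2
            - calP K₁s K₂ (Real.tan ϑ) u * calR K₁s K₂ (Real.tan ϑ) u))
        / calP K₁s K₂ (Real.tan ϑ) u)
      (nhdsWithin (π / (1 + Real.tan ϑ)) (Set.Iio (π / (1 + Real.tan ϑ))))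
      Filter.atTop := by
  have hs1 : 0 < Real.sinh (2 * K₁s) := by
    have h : 0 < Real.tanh K₁s := hdual₁ ▸ Real.exp_pos _
    rw [Real.tanh_eq_sinh_div_cosh] at h
    have h2 : 0 < Real.sinh K₁s := by
      have h3 := mul_pos h (Real.cosh_pos K₁s)
      rwa [div_mul_cancel₀ _ (Real.cosh_pos K₁s).ne'] at h3
    rw [Real.sinh_two_mul]
    have := Real.cosh_pos K₁s
    positivity
  have hs2 : 0 < Real.sinh (2 * K₂) := Real.sinh_pos_iff.2 (by linarith)
  have hc1 := Real.cosh_pos (2 * K₁s)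
  have hc2 := Real.cosh_pos (2 * K₂)
  have hpi := Real.pi_pos
  have ht0 : 0 < Real.tan ϑ := Real.tan_pos_of_pos_of_lt_pi_div_two hϑ₁ (by linarith)
  have ht1 : Real.tan ϑ < 1 := by
    rw [← Real.tan_pi_div_four]
    exact Real.tan_lt_tan_of_lt_of_lt_pi_div_two (by linarith) (by linarith) hϑ₂
  generalize Real.tan ϑ = t at ht0 ht1
  obtain ⟨w, hw⟩ : ∃ w, w = π / (1 + t) := ⟨_, rfl⟩
  rw [← hw]
  have hwt : w * (1 + t) = π := by rw [hw]; field_simp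
  have hw0 : 0 < w := by rw [hw]; positivity
  have hwpi : w < π := by nlinarith
  have hwpi2 : π / 2 < w := by nlinarith
  have hP : ∀ u ∈ Set.Ioo (0 : ℝ) w, 0 < calP K₁s K₂ t u := by
    rintro u ⟨h0, h1⟩
    have a : 0 < Real.sin (u * (1 - t)) :=
      Real.sin_pos_of_pos_of_lt_pi (mul_pos h0 (by linarith)) (by nlinarith)
    have b : 0 < Real.sin (u * (1 + t)) :=
      Real.sin_pos_of_pos_of_lt_pi (mul_pos h0 (by linarith)) (by nlinarith)
    unfold calP
    positivity
  refine ⟨hP, ?_⟩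
  have hPw : calP K₁s K₂ t w = 0 := by
    unfold calP
    rw [hwt, Real.sin_pi, mul_zero]
  have hQw : calQ K₁s K₂ t w < 0 := by
    have hc : Real.cos w < 0 :=
      Real.cos_neg_of_pi_div_two_lt_of_lt hwpi2 (by linarith)
    have hsn : 0 < Real.sin (w * t) :=
      Real.sin_pos_of_pos_of_lt_pi (mul_pos hw0 ht0) (by nlinarith)
    unfold calQ
    exact mul_neg_of_neg_of_pos (mul_neg_of_pos_of_neg (by positivity) hc) (by positivity)
  have hnum : Continuous (fun u => -(calQ K₁s K₂ t u)
      + Real.sqrt (calQ K₁s K₂ t u ^ 2 - calP K₁s K₂ t u * calR K₁s K₂ t u)) := by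
    unfold calQ calP calR
    fun_prop
  have hPc : Continuous (fun u => calP K₁s K₂ t u) := by
    unfold calP
    fun_prop
  have hnumpos : 0 < -(calQ K₁s K₂ t w)
      + Real.sqrt (calQ K₁s K₂ t w ^ 2 - calP K₁s K₂ t w * calR K₁s K₂ t w) := by
    have := Real.sqrt_nonneg (calQ K₁s K₂ t w ^ 2 - calP K₁s K₂ t w * calR K₁s K₂ t w)
    linarith
  have hinv : Tendsto (fun u => (calP K₁s K₂ t u)⁻¹) (nhdsWithin w (Set.Iio w)) atTop := by
    apply tendsto_inv_nhdsGT_zero.comp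
    apply tendsto_nhdsWithin_of_tendsto_nhds_of_eventually_within
    · have h := hPc.tendsto w
      rw [hPw] at h
      exact h.mono_left nhdsWithin_le_nhds
    · filter_upwards [Ioo_mem_nhdsLT hw0] with u hu using hP u hu
  simp only [div_eq_mul_inv]
  exact Tendsto.pos_mul_atTop hnumpos ((hnum.tendsto w).mono_left nhdsWithin_le_nhds) hinv
end

section
/- Let K₁, K₂ > 0, ϑ ∈ (0, π/2), t = tan ϑ, and let 𝒫, 𝒬, ℛ be as in the quadratic form of the steepest-descent-path equation. Then for every u ∈ (0, π) the discriminant Δ(u) = 𝒬(u)² − 𝒫(u)·ℛ(u) satisfies the identity Δ(u) = ((s₁⋆s₂)²/4)·cos²(ut)·[X₁(u) + X₂(u)·sin²(u)], where X₁(u) = (cos(2u) − cos(2ut))² and X₂(u) = 4(c₁⋆c₂)²·sin²(ut) + 2((s₁⋆s₂)² − 1)·(cos(2ut) − cos(2u)); moreover Δ(u) ≥ 0 for all u ∈ (0, π), and Δ(u) = 0 if and only if cos(ut) = 0, i.e. if and only if u = (2n+1)π/(2t) for some integer n ≥ 0. -/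
open Real Filter Set

theorem statement_15 (K₁ K₂ K₁s K₂s : ℝ) (hK₁ : 0 < K₁) (hK₂ : 0 < K₂)
    (hdual₁ : Real.tanh K₁s = Real.exp (-(2 * K₁)))
    (hdual₂ : Real.tanh K₂s = Real.exp (-(2 * K₂)))
    (ϑ : ℝ) (hϑ : ϑ ∈ Set.Ioo (0 : ℝ) (π / 2)) :
    ∀ u ∈ Set.Ioo (0 : ℝ) π,
      calQ K₁s K₂ (Real.tan ϑ) u ^ 2
          - calP K₁s K₂ (Real.tan ϑ) u * calR K₁s K₂ (Real.tan ϑ) u =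
        (Real.sinh (2 * K₁s) * Real.sinh (2 * K₂)) ^ 2 / 4
          * Real.cos (u * Real.tan ϑ) ^ 2
          * ((Real.cos (2 * u) - Real.cos (2 * (u * Real.tan ϑ))) ^ 2
            + (4 * (Real.cosh (2 * K₁s) * Real.cosh (2 * K₂)) ^ 2
                  * Real.sin (u * Real.tan ϑ) ^ 2
                + 2 * ((Real.sinh (2 * K₁s) * Real.sinh (2 * K₂)) ^ 2 - 1)
                  * (Real.cos (2 * (u * Real.tan ϑ)) - Real.cos (2 * u)))
              * Real.sin u ^ 2) ∧
      0 ≤ calQ K₁s K₂ (Real.tan ϑ) u ^ 2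
          - calP K₁s K₂ (Real.tan ϑ) u * calR K₁s K₂ (Real.tan ϑ) u ∧
      (calQ K₁s K₂ (Real.tan ϑ) u ^ 2
          - calP K₁s K₂ (Real.tan ϑ) u * calR K₁s K₂ (Real.tan ϑ) u = 0 ↔
        Real.cos (u * Real.tan ϑ) = 0) ∧
      (Real.cos (u * Real.tan ϑ) = 0 ↔
        ∃ n : ℕ, u = (2 * (n : ℝ) + 1) * π / (2 * Real.tan ϑ)) := by
  intro u hu
  obtain ⟨hu0, hu1⟩ := hu
  have ht : 0 < Real.tan ϑ := Real.tan_pos_of_pos_of_lt_pi_div_two hϑ.1 hϑ.2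
  generalize Real.tan ϑ = t at ht ⊢
  have hK : 0 < K₁s := by
    have h : 0 < Real.tanh K₁s := hdual₁ ▸ Real.exp_pos _
    rw [Real.tanh_eq_sinh_div_cosh] at h
    exact Real.sinh_pos_iff.mp ((div_pos_iff_of_pos_right (Real.cosh_pos _)).mp h)
  have hs1 : 0 < Real.sinh (2 * K₁s) := Real.sinh_pos_iff.mpr (by linarith)
  have hs2 : 0 < Real.sinh (2 * K₂) := Real.sinh_pos_iff.mpr (by linarith)
  have hc1 := Real.cosh_sq (2 * K₁s)
  have hc2 := Real.cosh_sq (2 * K₂)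
  have hsu : 0 < Real.sin u := Real.sin_pos_of_pos_of_lt_pi hu0 hu1
  have h1 := Real.sin_sq_add_cos_sq u
  have h2 := Real.sin_sq_add_cos_sq (u * t)
  have key : calQ K₁s K₂ t u ^ 2 - calP K₁s K₂ t u * calR K₁s K₂ t u =
      (Real.sinh (2 * K₁s) * Real.sinh (2 * K₂)) ^ 2 * Real.cos (u * t) ^ 2 *
      ((Real.sinh (2 * K₁s) * Real.sinh (2 * K₂)) ^ 2 * (Real.sin u ^ 2) ^ 2
        + (Real.sin (u * t) ^ 2) ^ 2
        + Real.sin u ^ 2 * Real.sin (u * t) ^ 2 *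
          (Real.sinh (2 * K₁s) ^ 2 + Real.sinh (2 * K₂) ^ 2)) := by
    have hP : Real.sin (u * (1 - t)) * Real.sin (u * (1 + t))
        = Real.sin u ^ 2 - Real.sin (u * t) ^ 2 := by
      rw [mul_sub, mul_add, mul_one, Real.sin_sub, Real.sin_add]
      have e1 : Real.cos u ^ 2 = 1 - Real.sin u ^ 2 := by linarith
      have e2 : Real.cos (u * t) ^ 2 = 1 - Real.sin (u * t) ^ 2 := by linarith
      ring_nf
      rw [e1, e2]
      ring
    unfold calQ calP calR
    rw [mul_assoc _ (Real.sin (u * (1 - t))), hP]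
    have e1 : Real.cos u ^ 2 = 1 - Real.sin u ^ 2 := by linarith
    have e2 : Real.cos (u * t) ^ 2 = 1 - Real.sin (u * t) ^ 2 := by linarith
    simp only [mul_pow, neg_mul]
    rw [hc1, hc2, e1, e2]
    ring
  have hB : 0 < (Real.sinh (2 * K₁s) * Real.sinh (2 * K₂)) ^ 2 * (Real.sin u ^ 2) ^ 2
        + (Real.sin (u * t) ^ 2) ^ 2
        + Real.sin u ^ 2 * Real.sin (u * t) ^ 2 *
          (Real.sinh (2 * K₁s) ^ 2 + Real.sinh (2 * K₂) ^ 2) := by positivity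
  rw [key]
  refine ⟨?_, by positivity, ?_, ?_⟩
  · have d1 : Real.cos (2 * u) = 1 - 2 * Real.sin u ^ 2 := by
      rw [Real.cos_two_mul]; linarith
    have d2 : Real.cos (2 * (u * t)) = 1 - 2 * Real.sin (u * t) ^ 2 := by
      rw [Real.cos_two_mul]; linarith
    rw [d1, d2, mul_pow (Real.cosh _), hc1, hc2]
    ring
  · constructor
    · intro h
      rcases mul_eq_zero.mp h with h | h
      · rcases mul_eq_zero.mp h with h | h
        · exact absurd h (by positivity)
        · exact pow_eq_zero_iff (two_ne_zero) |>.mp h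
      · exact absurd h hB.ne'
    · intro h
      rw [h]; ring
  · rw [Real.cos_eq_zero_iff]
    constructor
    · rintro ⟨k, hk⟩
      have hk0 : 0 ≤ k := by
        by_contra hneg
        have : k ≤ -1 := by omega
        have h3 : (k : ℝ) ≤ -1 := by exact_mod_cast this
        have h4 : 0 < u * t := mul_pos hu0 ht
        nlinarith [Real.pi_pos]
      lift k to ℕ using hk0
      refine ⟨k, ?_⟩
      push_cast at hk
      rw [eq_div_iff (by positivity)]
      linarith
    · rintro ⟨n, hn⟩
      refine ⟨n, ?_⟩
      rw [eq_div_iff (by positivity)] at hn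
      push_cast
      linarith
end

section
/- Let K₁, K₂ > 0 be couplings below criticality, and set A = exp(2K₁ + 2K₂⋆), B = exp(2K₁ − 2K₂⋆) = exp(γ̂(0)). Then for every v with 0 < v < γ̂(0): (i) (A − e^v)·(B − e^v)·(A·e^v − 1)·(B·e^v − 1) > 0; (ii) consequently 𝒥(v) = (1/4)·(A − B)²·(e^{2v} − 1)² / [(A − e^v)(B − e^v)(A·e^v − 1)(B·e^v − 1)] > 0; and (iii) the quantity 𝒯(v) = √((√(1 + 𝒥(v)) − 1)/(√(1 + 𝒥(v)) + 1)) satisfies 0 < 𝒯(v) < 1, so the point tension of the fluctuating contact points, τ_fcp = −ln 𝒯(v), is real and strictly positive. -/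
open Real Filter Set

/-- `𝒥(v)` of the paper, with `A = exp(2K₁ + 2K₂⋆)`, `B = exp(2K₁ − 2K₂⋆)`. -/
noncomputable def calJ (A B v : ℝ) : ℝ :=
  1 / 4 * (A - B) ^ 2 * (Real.exp (2 * v) - 1) ^ 2
    / ((A - Real.exp v) * (B - Real.exp v)
        * (A * Real.exp v - 1) * (B * Real.exp v - 1))

/-- `𝒯(v) = √((√(1+𝒥(v)) − 1)/(√(1+𝒥(v)) + 1))`. -/
noncomputable def calT (A B v : ℝ) : ℝ :=
  Real.sqrt ((Real.sqrt (1 + calJ A B v) - 1) / (Real.sqrt (1 + calJ A B v) + 1))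

theorem statement_19 (K₁ K₂ K₁s K₂s : ℝ) (hK₁ : 0 < K₁) (hK₂ : 0 < K₂)
    (hdual₁ : Real.tanh K₁s = Real.exp (-(2 * K₁)))
    (hdual₂ : Real.tanh K₂s = Real.exp (-(2 * K₂)))
    (hγ : 0 < 2 * K₂ - 2 * K₁s) (hγhat : 0 < 2 * K₁ - 2 * K₂s) :
    ∀ v : ℝ, 0 < v → v < 2 * K₁ - 2 * K₂s →
      (0 < (Real.exp (2 * K₁ + 2 * K₂s) - Real.exp v)
          * (Real.exp (2 * K₁ - 2 * K₂s) - Real.exp v)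
          * (Real.exp (2 * K₁ + 2 * K₂s) * Real.exp v - 1)
          * (Real.exp (2 * K₁ - 2 * K₂s) * Real.exp v - 1)) ∧
      0 < calJ (Real.exp (2 * K₁ + 2 * K₂s)) (Real.exp (2 * K₁ - 2 * K₂s)) v ∧
      0 < calT (Real.exp (2 * K₁ + 2 * K₂s)) (Real.exp (2 * K₁ - 2 * K₂s)) v ∧
      calT (Real.exp (2 * K₁ + 2 * K₂s)) (Real.exp (2 * K₁ - 2 * K₂s)) v < 1 ∧
      0 < -Real.log
          (calT (Real.exp (2 * K₁ + 2 * K₂s)) (Real.exp (2 * K₁ - 2 * K₂s)) v) := by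
  intro v hv0 hv
  have hs : 0 < K₂s := by
    by_contra hcon
    have h1 : 0 < Real.tanh K₂s := by rw [hdual₂]; exact Real.exp_pos _
    rw [Real.tanh_eq_sinh_div_cosh] at h1
    have h2 : Real.sinh K₂s ≤ 0 := Real.sinh_nonpos_iff.2 (not_lt.1 hcon)
    exact absurd h1 (not_lt.2 (div_nonpos_of_nonpos_of_nonneg h2 (Real.cosh_pos _).le))
  have hBv : Real.exp v < Real.exp (2 * K₁ - 2 * K₂s) := Real.exp_lt_exp.2 hv
  have hAB : Real.exp (2 * K₁ - 2 * K₂s) < Real.exp (2 * K₁ + 2 * K₂s) :=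
    Real.exp_lt_exp.2 (by linarith)
  have hv1 : 1 < Real.exp v := Real.one_lt_exp_iff.2 hv0
  have hv2 : 1 < Real.exp (2 * v) := Real.one_lt_exp_iff.2 (by linarith)
  generalize Real.exp (2 * K₁ - 2 * K₂s) = B at *
  generalize Real.exp (2 * K₁ + 2 * K₂s) = A at *
  have hD : 0 < (A - Real.exp v) * (B - Real.exp v)
      * (A * Real.exp v - 1) * (B * Real.exp v - 1) := by
    have h1 : 0 < A - Real.exp v := by linarith
    have h2 : 0 < B - Real.exp v := by linarith
    have h3 : 0 < A * Real.exp v - 1 := by nlinarith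
    have h4 : 0 < B * Real.exp v - 1 := by nlinarith
    positivity
  have hJ : 0 < calJ A B v := by
    unfold calJ
    have h1 : 0 < A - B := by linarith
    have h2 : 0 < Real.exp (2 * v) - 1 := by linarith
    exact div_pos (by positivity) hD
  have hS : 1 < Real.sqrt (1 + calJ A B v) := by
    rw [Real.lt_sqrt (by norm_num)]
    linarith
  have hT : 0 < calT A B v :=
    Real.sqrt_pos.2 (div_pos (by linarith) (by linarith))
  have hT1 : calT A B v < 1 := by
    unfold calT
    rw [Real.sqrt_lt' one_pos, div_lt_iff₀ (by linarith)]
    linarith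
  exact ⟨hD, hJ, hT, hT1, neg_pos.2 (Real.log_neg hT hT1)⟩
end
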